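/- Let Ξ₀ be a holomorphic function on the punctured unit disc B₁* having finite order n ∈ ℤ at 0, i.e. the function Ξ̃₀(z) := z^{-n}Ξ₀(z) extends holomorphically to the open unit disc with Ξ̃₀(0) ≠ 0. Let u : B₁* → ℝ be a C² function satisfying Δu(z) = 16 |Ξ₀(z)|² e^{2u(z)} on B₁*. Then either (i) there exists β < n+1 such that the function v(z) := u(z) + β·log|z| extends to a continuous function on the open unit disc, or (ii) the function ṽ(z) := u(z) + (n+1)·log|z| + log|log|z|| extends to a continuous function on the open unit disc whose value at 0 equals −2·log 2 − log|Ξ̃₀(0)|. -/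

import Mathlib

open Complex Real Set Topology Filter

/-- Partial derivative in the `x`-direction of a function on `ℂ ≅ ℝ²`. -/
noncomputable def pdx (f : ℂ → ℝ) (z : ℂ) : ℝ := deriv (fun t : ℝ => f (z + t)) 0

/-- Partial derivative in the `y`-direction. -/
noncomputable def pdy (f : ℂ → ℝ) (z : ℂ) : ℝ := deriv (fun t : ℝ => f (z + t * Complex.I)) 0

/-- The flat Laplacian `Δ = ∂²/∂x² + ∂²/∂y²`. -/
noncomputable def lap (f : ℂ → ℝ) (z : ℂ) : ℝ := pdx (pdx f) z + pdy (pdy f) z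

/-- The punctured open unit disc `B₁* = {0 < |z| < 1}`. -/
def PDisc : Set ℂ := {z : ℂ | 0 < ‖z‖ ∧ ‖z‖ < 1}

lemma snd_test {f f' : ℝ → ℝ} {x c : ℝ} (hmax : IsLocalMax f x)
    (h1 : ∀ᶠ y in 𝓝 x, HasDerivAt f (f' y) y) (h2 : HasDerivAt f' c x) : c ≤ 0 := by
  by_contra hc
  push Not at hc
  have e1 : deriv f =ᶠ[𝓝 x] f' := h1.mono fun y hy => hy.deriv
  have e2 : deriv (deriv f) x = c := by rw [e1.deriv_eq, h2.deriv]
  have e0 : deriv f x = 0 := hmax.deriv_eq_zero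
  have hmin := isLocalMin_of_deriv_deriv_pos (by rw [e2]; exact hc) e0
    h1.self_of_nhds.continuousAt
  have e3 : f =ᶠ[𝓝 x] fun _ => f x := by
    filter_upwards [hmin, hmax] with y h h' using le_antisymm h' h
  have e4 : deriv f =ᶠ[𝓝 x] fun _ => 0 := by
    have := e3.deriv
    simpa using this
  have e5 := e4.deriv_eq
  rw [e2] at e5
  simp at e5
  linarith

lemma max_princ {g g1 E : ℝ → ℝ} {k S t1 A : ℝ} (hk : 0 < k)
    (h1 : ∀ t, t1 ≤ t → HasDerivAt g (g1 t) t)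
    (h2 : ∀ t, t1 ≤ t → HasDerivAt g1 (k^2 * g t + E t) t)
    (hS : 0 ≤ S) (hE : ∀ t, t1 ≤ t → -S ≤ E t) (hA : g t1 ≤ A) (hA0 : 0 ≤ A)
    (gr : ∀ ε > 0, ∀ᶠ s in atTop, g s ≤ ε * Real.exp (k * (s - t1))) :
    ∀ t, t1 ≤ t → g t ≤ S / k^2 + A * Real.exp (-k * (t - t1)) := by
  intro t ht
  refine le_of_forall_pos_le_add fun ε' hε' => ?_
  obtain ⟨ε, hε, hεε⟩ : ∃ ε > 0, ε * Real.exp (k * (t - t1)) = ε' :=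
    ⟨ε' / Real.exp (k * (t - t1)), by positivity, by field_simp⟩
  rw [← hεε]
  obtain ⟨N, hN1, hN2⟩ := ((gr ε hε).and (eventually_ge_atTop t)).exists
  set B : ℝ → ℝ := fun s => S / k^2 + A * Real.exp (-k * (s - t1)) + ε * Real.exp (k * (s - t1))
    with hB
  set B1 : ℝ → ℝ := fun s => A * (Real.exp (-k * (s - t1)) * (-k)) +
    ε * (Real.exp (k * (s - t1)) * k) with hB1
  have dlin : ∀ (m s : ℝ), HasDerivAt (fun s => Real.exp (m * (s - t1)))
      (Real.exp (m * (s - t1)) * m) s := by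
    intro m s
    have := (((hasDerivAt_id s).sub_const t1).const_mul m).exp
    simpa using this
  have dB : ∀ s, HasDerivAt B (B1 s) s := by
    intro s
    exact (((dlin (-k) s).const_mul A).const_add _).add ((dlin k s).const_mul ε)
  have dB1 : ∀ s, HasDerivAt B1 (k^2 * B s - S) s := by
    intro s
    have := ((((dlin (-k) s).mul_const (-k)).const_mul A)).add
      (((dlin k s).mul_const k).const_mul ε)
    refine HasDerivAt.congr_deriv (f := B1) this ?_
    simp only [hB]; field_simp; ring
  by_contra hcon
  push Not at hcon
  have hht : 0 < g t - B t := by simp only [hB]; linarith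
  have hcont : ContinuousOn (fun s => g s - B s) (Icc t1 N) := fun s hs =>
    ((h1 s hs.1).sub (dB s)).continuousAt.continuousWithinAt
  obtain ⟨p, hp, hpmax⟩ := isCompact_Icc.exists_isMaxOn ⟨t, ht, hN2⟩ hcont
  have hp0 : 0 < g p - B p := lt_of_lt_of_le hht (hpmax ⟨ht, hN2⟩)
  have hSk : 0 ≤ S / k^2 := by positivity
  have hp1 : t1 < p := by
    rcases hp.1.eq_or_lt with h | h
    · exfalso
      rw [← h] at hp0
      simp [hB] at hp0
      linarith
    · exact h
  have hp2 : p < N := by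
    rcases hp.2.eq_or_lt with h | h
    · exfalso
      rw [h] at hp0
      simp only [hB] at hp0
      have : 0 ≤ A * Real.exp (-k * (N - t1)) := by positivity
      linarith
    · exact h
  have hloc : IsLocalMax (fun s => g s - B s) p :=
    hpmax.isLocalMax (Icc_mem_nhds hp1 hp2)
  have := snd_test hloc (f' := fun s => g1 s - B1 s) (c := (k^2 * g p + E p) - (k^2 * B p - S))
    (by filter_upwards [Ioi_mem_nhds hp1] with y hy using (h1 y (le_of_lt hy)).sub (dB y))
    ((h2 p hp.1).sub (dB1 p))
  have h3 := hE p hp.1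
  have h4 : 0 < k^2 * (g p - B p) := by positivity
  linarith

lemma slope_one {f f' : ℝ → ℝ} {T : ℝ} (hf : ∀ t, T < t → HasDerivAt f (f' t) t)
    (h : Tendsto f' atTop (𝓝 1)) : Tendsto (fun t => f t / t) atTop (𝓝 1) := by
  rw [Metric.tendsto_atTop]
  intro ε hε
  have := (Metric.tendsto_atTop.1 h) (ε/2) (by positivity)
  obtain ⟨T0, hT0⟩ := this
  set T1 := max (max T0 (T+1)) 1
  have hT1a : T0 ≤ T1 := (le_max_left _ _).trans (le_max_left _ _)
  have hT1b : T + 1 ≤ T1 := (le_max_right _ _).trans (le_max_left _ _)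
  have hT1c : 1 ≤ T1 := le_max_right _ _
  set C := |f T1 - T1| with hC
  refine ⟨max T1 (2 * C / ε + 1), fun t ht => ?_⟩
  have ht1 : T1 ≤ t := (le_max_left _ _).trans ht
  have ht2 : 2 * C / ε + 1 ≤ t := (le_max_right _ _).trans ht
  have key : ‖(f t - t) - (f T1 - T1)‖ ≤ (ε/2) * ‖t - T1‖ := by
    refine Convex.norm_image_sub_le_of_norm_hasDerivWithin_le (f := fun s => f s - s)
      (f' := fun s => f' s - 1) (s := Ici T1) (fun x hx => ?_) (fun x hx => ?_)
      (convex_Ici _) self_mem_Ici ht1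
    · have hx' : T1 ≤ x := hx
      exact ((hf x (by linarith)).sub (hasDerivAt_id x)).hasDerivWithinAt
    · have := hT0 x (hT1a.trans hx)
      rw [Real.dist_eq] at this
      exact this.le
  rw [Real.norm_eq_abs, Real.norm_eq_abs, abs_of_nonneg (by linarith : 0 ≤ t - T1)] at key
  have htpos : 0 < t := by linarith
  rw [Real.dist_eq, show f t / t - 1 = (f t - t) / t by field_simp, abs_div, abs_of_pos htpos,
    div_lt_iff₀ htpos]
  have h1 : |f t - t| ≤ |(f t - t) - (f T1 - T1)| + C := by
    have := abs_add_le ((f t - t) - (f T1 - T1)) (f T1 - T1)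
    simpa using this
  have h2 : 2 * C < t * ε := by
    have : 2 * C / ε < t := by linarith
    rwa [div_lt_iff₀ hε] at this
  nlinarith

lemma ode_asymp {M N R : ℝ → ℝ} {T : ℝ} (hM : ∀ t, T < t → HasDerivAt M (N t) t)
    (hN : ∀ t, T < t → HasDerivAt N (R t) t)
    (hR : Tendsto (fun t => R t * Real.exp (-2 * M t)) atTop (𝓝 1))
    (hbot : Tendsto M atTop atBot) :
    (∃ a > 0, ∃ c, Tendsto (fun t => M t + a * t) atTop (𝓝 c)) ∨
    Tendsto (fun t => M t + Real.log t) atTop (𝓝 0) := by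
  have ev : ∀ᶠ t in atTop, R t * Real.exp (-2 * M t) ∈ Ioo (0:ℝ) 2 :=
    hR.eventually (Ioo_mem_nhds (by norm_num) (by norm_num))
  obtain ⟨T0, hT0⟩ := eventually_atTop.1 ev
  set T1 := max T0 (T + 1)
  have hT1 : T < T1 := by have := le_max_right T0 (T+1); show T < max _ _; linarith
  have hRb : ∀ t, T1 ≤ t → 0 < R t ∧ R t < 2 * Real.exp (2 * M t) := by
    intro t ht
    obtain ⟨h1, h2⟩ := hT0 t ((le_max_left _ _).trans ht)
    have e : Real.exp (-2 * M t) * Real.exp (2 * M t) = 1 := by rw [← Real.exp_add]; simp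
    have hp := Real.exp_pos (-2 * M t)
    have hp2 := Real.exp_pos (2 * M t)
    constructor
    · exact pos_of_mul_pos_left h1 hp.le
    · calc R t = R t * Real.exp (-2 * M t) * Real.exp (2 * M t) := by rw [mul_assoc, e, mul_one]
        _ < _ := by gcongr
  have smono : StrictMonoOn N (Ici T1) := by
    refine strictMonoOn_of_deriv_pos (convex_Ici _)
      (fun t ht => (hN t (hT1.trans_le ht)).continuousAt.continuousWithinAt) (fun t ht => ?_)
    rw [interior_Ici] at ht
    rw [(hN t (hT1.trans ht)).deriv]
    exact (hRb t (le_of_lt ht)).1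
  have Nneg : ∀ t, T1 ≤ t → N t ≤ 0 := by
    intro t ht
    by_contra hc
    push Not at hc
    have mono : MonotoneOn M (Ici t) := by
      refine monotoneOn_of_deriv_nonneg (convex_Ici _)
        (fun s hs => (hM s (hT1.trans_le (ht.trans hs))).continuousAt.continuousWithinAt)
        (fun s hs => ?_) (fun s hs => ?_)
      · rw [interior_Ici] at hs
        exact (hM s (hT1.trans_le (ht.trans (le_of_lt hs)))).differentiableAt.differentiableWithinAt
      · rw [interior_Ici] at hs
        rw [(hM s (hT1.trans_le (ht.trans (le_of_lt hs)))).deriv]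
        have := smono ht (ht.trans (le_of_lt hs)) hs
        linarith
    obtain ⟨s, hs1, hs2⟩ := ((hbot.eventually (eventually_lt_atBot (M t))).and
      (eventually_ge_atTop t)).exists
    have := mono self_mem_Ici hs2 hs2
    linarith
  have Nneg' : ∀ t, T1 ≤ t → N t < 0 := by
    intro t ht
    have := smono (show t ∈ Ici T1 from ht) (show t + 1 ∈ Ici T1 by simp; linarith) (by linarith)
    have := Nneg (t+1) (by linarith)
    linarith
  -- limit of N
  obtain ⟨a, ha0, hNa, hNle⟩ : ∃ a, 0 ≤ a ∧ Tendsto N atTop (𝓝 (-a)) ∧ ∀ t, T1 ≤ t → N t ≤ -a := by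
    set N' : ℝ → ℝ := fun t => N (max t T1)
    have m : Monotone N' := fun x y hxy =>
      smono.monotoneOn (le_max_right x T1) (le_max_right y T1) (max_le_max_right _ hxy)
    have bdd : BddAbove (range N') := ⟨0, by rintro _ ⟨x, rfl⟩; exact Nneg _ (le_max_right _ _)⟩
    refine ⟨-(⨆ i, N' i), ?_, ?_, ?_⟩
    · have : (⨆ i, N' i) ≤ 0 := ciSup_le fun x => Nneg _ (le_max_right _ _)
      linarith
    · rw [neg_neg]
      refine (tendsto_atTop_ciSup m bdd).congr' ?_
      filter_upwards [eventually_ge_atTop T1] with t ht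
      simp [N', max_eq_left ht]
    · intro t ht
      rw [neg_neg]
      have := le_ciSup bdd t
      simpa [N', max_eq_left ht] using this
  rcases ha0.eq_or_lt with h0 | hpos
  · right
    rw [← h0, neg_zero] at hNa
    have hexp : Tendsto (fun t => Real.exp (2 * M t)) atTop (𝓝 0) :=
      Real.tendsto_exp_atBot.comp (hbot.const_mul_atBot (by norm_num))
    have lh : Tendsto (fun t => (N t)^2 / Real.exp (2 * M t)) atTop (𝓝 1) := by
      refine HasDerivAt.lhopital_zero_atTop_on_Ioi (a := T1)
        (f' := fun t => 2 * N t * R t) (g' := fun t => Real.exp (2 * M t) * (2 * N t))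
        (fun t ht => ?_) (fun t ht => ?_) (fun t ht => ?_) ?_ hexp ?_
      · have := (hN t (hT1.trans ht)).pow 2
        simpa using! this
      · exact ((hM t (hT1.trans ht)).const_mul 2).exp
      · have := Nneg' t (le_of_lt ht)
        have h2 := Real.exp_pos (2 * M t)
        have : 0 < Real.exp (2 * M t) * (-(2 * N t)) := mul_pos h2 (by linarith)
        show Real.exp (2 * M t) * (2 * N t) ≠ 0
        intro h3
        linarith
      · simpa using hNa.pow 2
      · refine hR.congr' ?_
        filter_upwards [eventually_ge_atTop T1] with t ht
        have h1 := (Nneg' t ht).ne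
        rw [show -2 * M t = -(2 * M t) by ring, Real.exp_neg]
        field_simp
    have lh2 : Tendsto (fun t => Real.exp (-M t) * (-N t)) atTop (𝓝 1) := by
      have := lh.sqrt
      rw [Real.sqrt_one] at this
      refine this.congr' ?_
      filter_upwards [eventually_ge_atTop T1] with t ht
      have h1 := (Nneg' t ht)
      rw [show (N t)^2 / Real.exp (2 * M t) = (Real.exp (-M t) * (-N t))^2 by
        rw [show 2 * M t = M t + M t by ring, Real.exp_add, Real.exp_neg]; field_simp]
      exact Real.sqrt_sq (mul_nonneg (Real.exp_pos _).le (by linarith))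
    have sl := slope_one (f := fun t => Real.exp (-M t)) (T := T1)
      (fun t ht => ((hM t (hT1.trans ht)).neg).exp) lh2
    have := (sl.log one_ne_zero).neg
    rw [Real.log_one, neg_zero] at this
    refine this.congr' ?_
    filter_upwards [eventually_gt_atTop 0] with t ht
    rw [Real.log_div (Real.exp_pos _).ne' ht.ne', Real.log_exp]
    ring
  · left
    refine ⟨a, hpos, ?_⟩
    have dMa : ∀ t, T1 ≤ t → HasDerivAt (fun t => M t + a * t) (N t + a) t := fun t ht => by
      have := (hM t (hT1.trans_le ht)).add ((hasDerivAt_id t).const_mul a)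
      simpa using! this
    have anti : AntitoneOn (fun t => M t + a * t) (Ici T1) := by
      refine antitoneOn_of_deriv_nonpos (convex_Ici _)
        (fun s hs => (dMa s hs).continuousAt.continuousWithinAt) (fun s hs => ?_) (fun s hs => ?_)
      · rw [interior_Ici] at hs
        exact (dMa s (le_of_lt hs)).differentiableAt.differentiableWithinAt
      · rw [interior_Ici] at hs
        rw [(dMa s (le_of_lt hs)).deriv]
        have := hNle s (le_of_lt hs)
        linarith
    set K := 2 * Real.exp (2 * (M T1 + a * T1)) with hK
    have hKpos : 0 < K := by positivity
    have hRK : ∀ t, T1 ≤ t → R t ≤ K * Real.exp (-(2 * a) * t) := by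
      intro t ht
      refine (hRb t ht).2.le.trans ?_
      rw [hK, mul_assoc, ← Real.exp_add]
      have := anti self_mem_Ici ht ht
      simp only at this
      gcongr
      linarith
    have dE : ∀ t, HasDerivAt (fun t => Real.exp (-(2 * a) * t))
        (Real.exp (-(2 * a) * t) * (-(2 * a))) t := fun t => by
      have := ((hasDerivAt_id t).const_mul (-(2 * a))).exp
      simpa using this
    have E0 : Tendsto (fun t => Real.exp (-(2 * a) * t)) atTop (𝓝 0) :=
      Real.tendsto_exp_atBot.comp (tendsto_id.const_mul_atTop_of_neg (by linarith))
    -- the corrected slope is antitone with limit zero, so nonneg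
    have anti2 : AntitoneOn (fun t => N t + K / (2 * a) * Real.exp (-(2 * a) * t)) (Ici T1) := by
      have d : ∀ t, T1 ≤ t → HasDerivAt (fun t => N t + K / (2 * a) * Real.exp (-(2 * a) * t))
          (R t - K * Real.exp (-(2 * a) * t)) t := fun t ht => by
        convert! (hN t (hT1.trans_le ht)).add ((dE t).const_mul (K / (2 * a))) using 1
        field_simp; ring
      refine antitoneOn_of_deriv_nonpos (convex_Ici _)
        (fun s hs => (d s hs).continuousAt.continuousWithinAt) (fun s hs => ?_) (fun s hs => ?_)
      · rw [interior_Ici] at hs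
        exact (d s (le_of_lt hs)).differentiableAt.differentiableWithinAt
      · rw [interior_Ici] at hs
        rw [(d s (le_of_lt hs)).deriv]
        have := hRK s (le_of_lt hs)
        linarith
    have low : ∀ t, T1 ≤ t → 0 ≤ N t + a + K / (2 * a) * Real.exp (-(2 * a) * t) := by
      intro t ht
      have lim : Tendsto (fun t => N t + K / (2 * a) * Real.exp (-(2 * a) * t)) atTop (𝓝 (-a)) := by
        have := hNa.add (E0.const_mul (K / (2 * a)))
        simpa using this
      have := le_of_tendsto lim (b := N t + K / (2 * a) * Real.exp (-(2 * a) * t)) (by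
        filter_upwards [eventually_ge_atTop t] with s hs using anti2 ht (ht.trans hs) hs)
      linarith
    set K2 := K / (2 * a) / (2 * a) with hK2
    have mono3 : MonotoneOn (fun t => M t + a * t - K2 * Real.exp (-(2 * a) * t)) (Ici T1) := by
      have d : ∀ t, T1 ≤ t → HasDerivAt (fun t => M t + a * t - K2 * Real.exp (-(2 * a) * t))
          (N t + a + K / (2 * a) * Real.exp (-(2 * a) * t)) t := fun t ht => by
        convert! (dMa t ht).sub ((dE t).const_mul K2) using 1
        rw [hK2]; field_simp; ring
      refine monotoneOn_of_deriv_nonneg (convex_Ici _)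
        (fun s hs => (d s hs).continuousAt.continuousWithinAt) (fun s hs => ?_) (fun s hs => ?_)
      · rw [interior_Ici] at hs
        exact (d s (le_of_lt hs)).differentiableAt.differentiableWithinAt
      · rw [interior_Ici] at hs
        rw [(d s (le_of_lt hs)).deriv]
        exact low s (le_of_lt hs)
    set V : ℝ → ℝ := fun t => M (max t T1) + a * (max t T1) with hV
    have mV : Antitone V := fun x y hxy =>
      anti (le_max_right x T1) (le_max_right y T1) (max_le_max_right _ hxy)
    have bV : BddBelow (range V) := by
      refine ⟨M T1 + a * T1 - K2 * Real.exp (-(2 * a) * T1), ?_⟩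
      rintro _ ⟨x, rfl⟩
      have := mono3 self_mem_Ici (le_max_right x T1) (le_max_right x T1)
      simp only at this
      have h2 : 0 ≤ K2 * Real.exp (-(2 * a) * (max x T1)) := by positivity
      simp only [hV]; linarith
    refine ⟨_, (tendsto_atTop_ciInf mV bV).congr' ?_⟩
    filter_upwards [eventually_ge_atTop T1] with t ht
    simp [hV, max_eq_left ht]

lemma barrier1 {u u' : ℝ → ℝ} {u2 x a0 K : ℝ} (hD : 0 < K - (x - a0)^2)
    (hu : ∀ᶠ s in 𝓝 x, HasDerivAt u (u' s) s) (hu2 : HasDerivAt u' u2 x)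
    (hmax : ∀ᶠ s in 𝓝 x, Real.exp (u s) * (K - (s - a0)^2) ≤ Real.exp (u x) * (K - (x - a0)^2)) :
    u2 + (-2 * (K - (x - a0)^2) - 4 * (x - a0)^2) / (K - (x - a0)^2)^2 ≤ 0 := by
  have dD : ∀ s, HasDerivAt (fun s => K - (s - a0)^2) (-(2 * (s - a0))) s := fun s => by
    have := (((hasDerivAt_id s).sub_const a0).pow 2).const_sub K
    simpa using! this
  have evD : ∀ᶠ s in 𝓝 x, 0 < K - (s - a0)^2 :=
    (dD x).continuousAt.eventually (lt_mem_nhds hD)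
  refine snd_test (f := fun s => u s + Real.log (K - (s - a0)^2))
    (f' := fun s => u' s + (-(2 * (s - a0))) / (K - (s - a0)^2)) (x := x) ?_ ?_ ?_
  · filter_upwards [hmax, evD] with s h1 h2
    have := Real.log_le_log (by positivity) h1
    rwa [Real.log_mul (Real.exp_pos _).ne' h2.ne', Real.log_mul (Real.exp_pos _).ne' hD.ne',
      Real.log_exp, Real.log_exp] at this
  · filter_upwards [hu, evD] with s h1 h2
    exact h1.add ((dD s).log h2.ne')
  · have e : HasDerivAt (fun s : ℝ => -(2 * (s - a0))) (-2) x := by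
      have := (((hasDerivAt_id x).sub_const a0).const_mul 2).neg
      simpa using! this
    refine HasDerivAt.congr_deriv (hu2.add (e.div (dD x) hD.ne')) ?_
    congr 2
    ring

/-- Data on the half cylinder. -/
structure Cyl (U P PP Q QQ H : ℝ → ℝ → ℝ) : Prop where
  cU : ContinuousOn (Function.uncurry U) (Ioi 0 ×ˢ univ)
  cP : ContinuousOn (Function.uncurry P) (Ioi 0 ×ˢ univ)
  cPP : ContinuousOn (Function.uncurry PP) (Ioi 0 ×ˢ univ)
  cQQ : ContinuousOn (Function.uncurry QQ) (Ioi 0 ×ˢ univ)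
  dU : ∀ t θ, 0 < t → HasDerivAt (fun s => U s θ) (P t θ) t
  dP : ∀ t θ, 0 < t → HasDerivAt (fun s => P s θ) (PP t θ) t
  dUθ : ∀ t θ, 0 < t → HasDerivAt (fun s => U t s) (Q t θ) θ
  dQ : ∀ t θ, 0 < t → HasDerivAt (fun s => Q t s) (QQ t θ) θ
  perU : ∀ t θ, 0 < t → U t (θ + 2 * π) = U t θ
  perQ : ∀ t θ, 0 < t → Q t (θ + 2 * π) = Q t θ
  pde : ∀ t θ, 0 < t → PP t θ + QQ t θ = H t θ * Real.exp (2 * U t θ)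
  limH : ∀ ε > 0, ∃ T, ∀ t, T ≤ t → ∀ θ, |H t θ - 1| ≤ ε

lemma Cyl.slice {F : ℝ → ℝ → ℝ} (h : ContinuousOn (Function.uncurry F) (Ioi 0 ×ˢ univ))
    {t : ℝ} (ht : 0 < t) : Continuous (F t) := by
  have : ContinuousOn (fun θ => Function.uncurry F (t, θ)) univ :=
    h.comp (by fun_prop) (fun x _ => ⟨ht, trivial⟩)
  exact continuousOn_univ.1 this

lemma Cyl.upper {U P PP Q QQ H : ℝ → ℝ → ℝ} (h : Cyl U P PP Q QQ H) {T : ℝ} (hT : 0 < T)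
    (hH : ∀ t, T ≤ t → ∀ θ, 1/2 ≤ H t θ) (t0 θ0 : ℝ) (ht0 : T < t0) :
    Real.exp (2 * U t0 θ0) ≤ 8 / (t0 - T)^2 := by
  set R := t0 - T with hR
  have hRpos : 0 < R := by rw [hR]; linarith
  set K : Set (ℝ × ℝ) := {p | (p.1 - t0)^2 + (p.2 - θ0)^2 ≤ R^2} with hK
  have hKT : ∀ p ∈ K, T ≤ p.1 := by
    intro p hp
    have hp' : (p.1 - t0)^2 + (p.2 - θ0)^2 ≤ R^2 := hp
    have : (p.1 - t0)^2 ≤ R^2 := by nlinarith [sq_nonneg (p.2 - θ0)]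
    have := abs_le_of_sq_le_sq' this hRpos.le
    linarith [this.1]
  have hKc : IsCompact K := by
    refine (isCompact_Icc.prod isCompact_Icc :
      IsCompact (Icc (t0 - R) (t0 + R) ×ˢ Icc (θ0 - R) (θ0 + R))).of_isClosed_subset
      (isClosed_le (by fun_prop) (by fun_prop)) ?_
    intro p hp
    have hp' : (p.1 - t0)^2 + (p.2 - θ0)^2 ≤ R^2 := hp
    have h1 : (p.1 - t0)^2 ≤ R^2 := by nlinarith [sq_nonneg (p.2 - θ0)]
    have h2 : (p.2 - θ0)^2 ≤ R^2 := by nlinarith [sq_nonneg (p.1 - t0)]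
    have h1 := abs_le_of_sq_le_sq' h1 hRpos.le
    have h2 := abs_le_of_sq_le_sq' h2 hRpos.le
    exact ⟨⟨by linarith, by linarith⟩, ⟨by linarith, by linarith⟩⟩
  set ψ : ℝ × ℝ → ℝ := fun p => Real.exp (U p.1 p.2) * (R^2 - (p.1 - t0)^2 - (p.2 - θ0)^2) with hψ
  have cψ : ContinuousOn ψ K := by
    refine ContinuousOn.mul (Real.continuous_exp.comp_continuousOn ?_) (by fun_prop)
    exact h.cU.mono fun p hp => ⟨hT.trans_le (hKT p hp), trivial⟩
  have hc : (t0, θ0) ∈ K := by simp only [hK, mem_ofPred_eq]; simp; positivity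
  obtain ⟨⟨x, y⟩, hp, hmax⟩ := hKc.exists_isMaxOn ⟨_, hc⟩ cψ
  have hmax' : ∀ s r, (s - t0)^2 + (r - θ0)^2 ≤ R^2 →
    Real.exp (U s r) * (R^2 - (s - t0)^2 - (r - θ0)^2) ≤
    Real.exp (U x y) * (R^2 - (x - t0)^2 - (y - θ0)^2) := fun s r hs => hmax (show (s, r) ∈ K from hs)
  have hcen := hmax' t0 θ0 (by simp; positivity)
  simp only [sub_self] at hcen
  have hDpos : 0 < R^2 - (x - t0)^2 - (y - θ0)^2 := by
    have : 0 < Real.exp (U t0 θ0) * (R^2 - 0^2 - 0^2) := by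
      have : (0:ℝ) < R^2 - 0^2 - 0^2 := by simp; positivity
      positivity
    exact pos_of_mul_pos_right (this.trans_le hcen) (Real.exp_pos _).le
  have hx : T ≤ x := hKT _ hp
  have hx0 : 0 < x := hT.trans_le hx
  have b1 := barrier1 (u := fun s => U s y) (u' := fun s => P s y) (u2 := PP x y) (x := x) (a0 := t0)
    (K := R^2 - (y - θ0)^2) (by linarith)
    (by filter_upwards [lt_mem_nhds hx0] with s hs using h.dU s y hs) (h.dP x y hx0) (by
      have : ∀ᶠ s in 𝓝 x, 0 < R^2 - (s - t0)^2 - (y - θ0)^2 :=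
        (by fun_prop : ContinuousAt (fun s : ℝ => R^2 - (s - t0)^2 - (y - θ0)^2) x).eventually
          (lt_mem_nhds hDpos)
      filter_upwards [this] with s hs
      have := hmax' s y (by linarith)
      rw [show R^2 - (y - θ0)^2 - (s - t0)^2 = R^2 - (s - t0)^2 - (y - θ0)^2 by ring,
        show R^2 - (y - θ0)^2 - (x - t0)^2 = R^2 - (x - t0)^2 - (y - θ0)^2 by ring]
      exact this)
  have b2 := barrier1 (u := fun s => U x s) (u' := fun s => Q x s) (u2 := QQ x y) (x := y) (a0 := θ0)
    (K := R^2 - (x - t0)^2) (by linarith)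
    (Eventually.of_forall fun s => h.dUθ x s hx0) (h.dQ x y hx0) (by
      have : ∀ᶠ s in 𝓝 y, 0 < R^2 - (x - t0)^2 - (s - θ0)^2 :=
        (by fun_prop : ContinuousAt (fun s : ℝ => R^2 - (x - t0)^2 - (s - θ0)^2) y).eventually
          (lt_mem_nhds hDpos)
      filter_upwards [this] with s hs
      exact hmax' x s (by linarith))
  rw [show R^2 - (y - θ0)^2 - (x - t0)^2 = R^2 - (x - t0)^2 - (y - θ0)^2 by ring] at b1
  set D := R^2 - (x - t0)^2 - (y - θ0)^2 with hD
  have key : H x y * Real.exp (2 * U x y) ≤ 4 * R^2 / D^2 := by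
    rw [← h.pde x y hx0]
    have : 4 * R^2 / D^2 = - ((-2 * D - 4 * (x - t0)^2) / D^2) - ((-2 * D - 4 * (y - θ0)^2) / D^2) := by
      rw [← neg_div, ← sub_div]
      congr 1
      rw [hD]; ring
    linarith
  have hHx := hH x hx y
  have key2 : (Real.exp (U x y) * D)^2 ≤ 8 * R^2 := by
    rw [le_div_iff₀ (by positivity)] at key
    have e : Real.exp (2 * U x y) = Real.exp (U x y)^2 := by rw [← Real.exp_nat_mul]; norm_num
    rw [e] at key
    have : 0 ≤ Real.exp (U x y)^2 * D^2 := by positivity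
    nlinarith
  have key3 : (Real.exp (U t0 θ0) * R^2)^2 ≤ 8 * R^2 := by
    refine le_trans ?_ key2
    have : Real.exp (U t0 θ0) * R^2 ≤ Real.exp (U x y) * D := by simpa using hcen
    gcongr
  rw [le_div_iff₀ (by positivity)]
  have e : Real.exp (2 * U t0 θ0) = Real.exp (U t0 θ0)^2 := by rw [← Real.exp_nat_mul]; norm_num
  rw [e]
  have hR2 : 0 < R^2 := by positivity
  refine le_of_mul_le_mul_right ?_ hR2
  calc _ = (Real.exp (U t0 θ0) * R^2)^2 := by ring
    _ ≤ _ := key3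

lemma deriv_int {F F' : ℝ → ℝ → ℝ} (cF : ContinuousOn (Function.uncurry F) (Ioi 0 ×ˢ univ))
    (cF' : ContinuousOn (Function.uncurry F') (Ioi 0 ×ˢ univ))
    (dF : ∀ t θ, 0 < t → HasDerivAt (fun s => F s θ) (F' t θ) t)
    {c : ℝ → ℝ} (hc : Continuous c) {t : ℝ} (ht : 0 < t) :
    HasDerivAt (fun s => ∫ θ in (0:ℝ)..(2 * π), F s θ * c θ)
      (∫ θ in (0:ℝ)..(2 * π), F' t θ * c θ) t := by
  have hcomp : IsCompact (Icc (t/2) (2*t) ×ˢ Icc (0:ℝ) (2*π)) := isCompact_Icc.prod isCompact_Icc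
  have hcont : ContinuousOn (fun p : ℝ × ℝ => F' p.1 p.2 * c p.2)
      (Icc (t/2) (2*t) ×ˢ Icc (0:ℝ) (2*π)) := by
    refine ContinuousOn.mul (cF'.mono ?_) (by fun_prop)
    rintro p ⟨hp, -⟩
    exact ⟨lt_of_lt_of_le (by positivity) hp.1, trivial⟩
  obtain ⟨C, hC⟩ := hcomp.exists_bound_of_continuousOn hcont
  have hpi : (0:ℝ) ≤ 2 * π := by positivity
  refine (intervalIntegral.hasDerivAt_integral_of_dominated_loc_of_deriv_le
    (F := fun s θ => F s θ * c θ) (F' := fun s θ => F' s θ * c θ) (s := Icc (t/2) (2*t))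
    (bound := fun _ => C) (Icc_mem_nhds (by linarith) (by linarith)) ?_ ?_ ?_ ?_ ?_ ?_).2
  · filter_upwards [lt_mem_nhds ht] with s hs
    exact ((Cyl.slice cF hs).mul hc).aestronglyMeasurable
  · exact ((Cyl.slice cF ht).mul hc).intervalIntegrable _ _
  · exact ((Cyl.slice cF' ht).mul hc).aestronglyMeasurable
  · refine Eventually.of_forall fun θ hθ s hs => ?_
    rw [uIoc_of_le hpi] at hθ
    exact hC (s, θ) ⟨hs, hθ.1.le, hθ.2⟩
  · exact intervalIntegrable_const
  · refine Eventually.of_forall fun θ hθ s hs => ?_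
    exact (dF s θ (lt_of_lt_of_le (by positivity) hs.1)).mul_const _

lemma Cyl.coef_ode {U P PP Q QQ H : ℝ → ℝ → ℝ} (h : Cyl U P PP Q QQ H) {c d : ℝ → ℝ} {k : ℝ}
    (hc : ∀ x, HasDerivAt c (d x) x) (hd : ∀ x, HasDerivAt d (-k^2 * c x) x)
    (pc : c (2 * π) = c 0) (pd : d (2 * π) = d 0) {t : ℝ} (ht : 0 < t) :
    ∫ θ in (0:ℝ)..(2 * π), PP t θ * c θ =
      k^2 * (∫ θ in (0:ℝ)..(2 * π), U t θ * c θ) +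
      ∫ θ in (0:ℝ)..(2 * π), (H t θ * Real.exp (2 * U t θ)) * c θ := by
  have cc : Continuous c := continuous_iff_continuousAt.2 fun x => (hc x).continuousAt
  have cd : Continuous d := continuous_iff_continuousAt.2 fun x => (hd x).continuousAt
  have cUt := Cyl.slice h.cU ht
  have cPPt := Cyl.slice h.cPP ht
  have cQQt := Cyl.slice h.cQQ ht
  have cQt : Continuous (Q t) := continuous_iff_continuousAt.2 fun x => (h.dQ t x ht).continuousAt
  have pU : U t (2 * π) = U t 0 := by have := h.perU t 0 ht; rwa [zero_add] at this
  have pQ : Q t (2 * π) = Q t 0 := by have := h.perQ t 0 ht; rwa [zero_add] at this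
  -- antiderivative
  have ftc : ∫ θ in (0:ℝ)..(2 * π), (QQ t θ * c θ + k^2 * (U t θ * c θ)) = 0 := by
    rw [intervalIntegral.integral_eq_sub_of_hasDerivAt (f := fun θ => Q t θ * c θ - U t θ * d θ)]
    · rw [pU, pQ, pc, pd, sub_self]
    · intro x _
      refine HasDerivAt.congr_deriv (((h.dQ t x ht).mul (hc x)).sub ((h.dUθ t x ht).mul (hd x))) ?_
      ring
    · exact Continuous.intervalIntegrable (by fun_prop) _ _
  rw [intervalIntegral.integral_add (Continuous.intervalIntegrable (by fun_prop) _ _)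
    (Continuous.intervalIntegrable (by fun_prop) _ _), intervalIntegral.integral_const_mul] at ftc
  have e : ∫ θ in (0:ℝ)..(2 * π), (H t θ * Real.exp (2 * U t θ)) * c θ =
      (∫ θ in (0:ℝ)..(2 * π), PP t θ * c θ) + ∫ θ in (0:ℝ)..(2 * π), QQ t θ * c θ := by
    rw [← intervalIntegral.integral_add (Continuous.intervalIntegrable (by fun_prop) _ _)
      (Continuous.intervalIntegrable (by fun_prop) _ _)]
    congr 1
    ext θ
    rw [← h.pde t θ ht]; ring
  rw [e]
  linarith

lemma Cyl.nonpos {U P PP Q QQ H : ℝ → ℝ → ℝ} (h : Cyl U P PP Q QQ H) {T : ℝ} (hT : 0 < T)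
    (hH : ∀ t, T ≤ t → ∀ θ, 1/2 ≤ H t θ ∧ H t θ ≤ 2) {t : ℝ} (ht : T + 3 ≤ t) (θ : ℝ) :
    U t θ ≤ 0 := by
  have h1 := h.upper hT (fun t ht θ => (hH t ht θ).1) t θ (by linarith)
  have h2 : 8 / (t - T)^2 ≤ 1 := by
    rw [div_le_one (by nlinarith)]
    nlinarith
  have := Real.exp_le_one_iff.1 (h1.trans h2)
  linarith

lemma Cyl.mean_ode {U P PP Q QQ H : ℝ → ℝ → ℝ} (h : Cyl U P PP Q QQ H) {t : ℝ} (ht : 0 < t) :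
    HasDerivAt (fun s => ∫ θ in (0:ℝ)..(2 * π), U s θ) (∫ θ in (0:ℝ)..(2 * π), P t θ) t ∧
    HasDerivAt (fun s => ∫ θ in (0:ℝ)..(2 * π), P s θ)
      (∫ θ in (0:ℝ)..(2 * π), H t θ * Real.exp (2 * U t θ)) t := by
  have h1 := deriv_int h.cU h.cP h.dU (c := fun _ => 1) continuous_const ht
  have h2 := deriv_int h.cP h.cPP h.dP (c := fun _ => 1) continuous_const ht
  have h3 := h.coef_ode (c := fun _ => 1) (d := fun _ => 0) (k := 0)
    (fun x => hasDerivAt_const x (1:ℝ))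
    (fun x => by simpa using hasDerivAt_const x (0:ℝ)) rfl rfl ht
  rw [h3] at h2
  simp only [mul_one] at h1 h2
  refine ⟨h1, ?_⟩
  simpa using h2

lemma Cyl.growth {U P PP Q QQ H : ℝ → ℝ → ℝ} (h : Cyl U P PP Q QQ H) {T : ℝ} (hT : 0 < T)
    (hH : ∀ t, T ≤ t → ∀ θ, 1/2 ≤ H t θ ∧ H t θ ≤ 2) :
    ∃ A B : ℝ, 0 ≤ A ∧ 0 ≤ B ∧
      ∀ t, T + 3 ≤ t → -(∫ θ in (0:ℝ)..(2 * π), U t θ) ≤ A + B * t := by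
  set M := fun s => ∫ θ in (0:ℝ)..(2 * π), U s θ with hM
  set N := fun s => ∫ θ in (0:ℝ)..(2 * π), P s θ with hN
  have dM : ∀ t, 0 < t → HasDerivAt M (N t) t := fun t ht => (h.mean_ode ht).1
  have dN := fun t (ht : 0 < t) => (h.mean_ode ht).2
  set t2 := T + 3 with ht2
  have t2pos : 0 < t2 := by linarith
  have mN : MonotoneOn N (Ici t2) := by
    refine monotoneOn_of_deriv_nonneg (convex_Ici _)
      (fun s hs => (dN s (t2pos.trans_le hs)).continuousAt.continuousWithinAt)
      (fun s hs => ?_) (fun s hs => ?_)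
    · rw [interior_Ici] at hs
      exact (dN s (t2pos.trans hs)).differentiableAt.differentiableWithinAt
    · rw [interior_Ici] at hs
      rw [(dN s (t2pos.trans hs)).deriv]
      have hs' : t2 < s := hs
      refine intervalIntegral.integral_nonneg (by positivity) fun θ _ => ?_
      have := (hH s (by linarith) θ).1
      have : 0 ≤ H s θ := by linarith
      positivity
  have mM : MonotoneOn (fun t => M t - N t2 * t) (Ici t2) := by
    have d : ∀ t, t2 ≤ t → HasDerivAt (fun t => M t - N t2 * t) (N t - N t2) t := fun t ht => by
      have := (dM t (t2pos.trans_le ht)).sub ((hasDerivAt_id t).const_mul (N t2))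
      simpa using! this
    refine monotoneOn_of_deriv_nonneg (convex_Ici _)
      (fun s hs => (d s hs).continuousAt.continuousWithinAt)
      (fun s hs => ?_) (fun s hs => ?_)
    · rw [interior_Ici] at hs
      exact (d s (le_of_lt hs)).differentiableAt.differentiableWithinAt
    · rw [interior_Ici] at hs
      rw [(d s (le_of_lt hs)).deriv]
      have := mN self_mem_Ici (Ioi_subset_Ici_self hs) (le_of_lt hs)
      linarith
  refine ⟨|M t2 - N t2 * t2|, |N t2|, abs_nonneg _, abs_nonneg _, fun t ht => ?_⟩
  have h1 := mM self_mem_Ici ht ht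
  simp only at h1
  have h2 := neg_abs_le (M t2 - N t2 * t2)
  have h3 : -|N t2| * t ≤ N t2 * t :=
    mul_le_mul_of_nonneg_right (neg_abs_le _) (by linarith)
  show - M t ≤ _
  linarith

lemma Cyl.coef_bound {U P PP Q QQ H : ℝ → ℝ → ℝ} (h : Cyl U P PP Q QQ H) {T : ℝ} (hT : 0 < T)
    (hH : ∀ t, T ≤ t → ∀ θ, 1/2 ≤ H t θ ∧ H t θ ≤ 2) {A B : ℝ} (hA : 0 ≤ A) (hB : 0 ≤ B)
    (hAB : ∀ t, T + 3 ≤ t → -(∫ θ in (0:ℝ)..(2 * π), U t θ) ≤ A + B * t)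
    {c d : ℝ → ℝ} {k : ℝ} (hk : 0 < k)
    (hc : ∀ x, HasDerivAt c (d x) x) (hd : ∀ x, HasDerivAt d (-k^2 * c x) x)
    (pc : c (2 * π) = c 0) (pd : d (2 * π) = d 0) (hc1 : ∀ x, |c x| ≤ 1)
    {t1 t : ℝ} (ht1 : T + 3 ≤ t1) (ht : t1 ≤ t) :
    |∫ θ in (0:ℝ)..(2 * π), U t θ * c θ| ≤
      (16 / (t1 - T)^2 * (2 * π)) / k^2 + (A + B * t1) * Real.exp (-k * (t - t1)) := by
  have hpi : (0:ℝ) ≤ 2 * π := by positivity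
  have cc : Continuous c := continuous_iff_continuousAt.2 fun x => (hc x).continuousAt
  set g := fun s => ∫ θ in (0:ℝ)..(2 * π), U s θ * c θ with hg
  set g1 := fun s => ∫ θ in (0:ℝ)..(2 * π), P s θ * c θ with hg1
  set E := fun s => ∫ θ in (0:ℝ)..(2 * π), (H s θ * Real.exp (2 * U s θ)) * c θ with hE
  have d1 : ∀ s, t1 ≤ s → HasDerivAt g (g1 s) s := fun s hs =>
    deriv_int h.cU h.cP h.dU cc (by linarith)
  have d2 : ∀ s, t1 ≤ s → HasDerivAt g1 (k^2 * g s + E s) s := fun s hs => by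
    have h2 := deriv_int h.cP h.cPP h.dP cc (t := s) (by linarith)
    rwa [h.coef_ode hc hd pc pd (by linarith)] at h2
  have bE : ∀ s, t1 ≤ s → |E s| ≤ 16 / (t1 - T)^2 * (2 * π) := by
    intro s hs
    have := intervalIntegral.norm_integral_le_of_norm_le_const (a := 0) (b := 2 * π)
      (C := 16 / (t1 - T)^2) (f := fun θ => (H s θ * Real.exp (2 * U s θ)) * c θ) (fun θ _ => by
        have h1 := h.upper hT (fun t ht θ => (hH t ht θ).1) s θ (by linarith)
        have h2 := hH s (by linarith) θ
        have h3 : 8 / (s - T)^2 ≤ 8 / (t1 - T)^2 := by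
          have : 0 < t1 - T := by linarith
          gcongr
        rw [norm_mul, norm_mul, Real.norm_eq_abs, Real.norm_eq_abs, Real.norm_eq_abs,
          abs_of_nonneg (by linarith : 0 ≤ H s θ), Real.abs_exp]
        calc _ ≤ 2 * (8 / (t1 - T)^2) * 1 := by
              gcongr
              · exact h2.2
              · exact h1.trans h3
              · exact hc1 θ
          _ = _ := by ring)
    rwa [sub_zero, abs_of_nonneg hpi] at this
  have bg : ∀ s, t1 ≤ s → |g s| ≤ A + B * s := by
    intro s hs
    have hs0 : 0 < s := by linarith
    refine le_trans ?_ (hAB s (by linarith))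
    rw [← intervalIntegral.integral_neg, ← Real.norm_eq_abs]
    refine intervalIntegral.norm_integral_le_of_norm_le hpi (Eventually.of_forall fun θ _ => ?_)
      ((Cyl.slice h.cU hs0).neg.intervalIntegrable _ _)
    have := h.nonpos hT hH (by linarith : T + 3 ≤ s) θ
    rw [norm_mul, Real.norm_eq_abs, Real.norm_eq_abs, abs_of_nonpos this]
    exact mul_le_of_le_one_right (by linarith) (hc1 θ)
  have gr : ∀ ε > 0, ∀ᶠ s in atTop, A + B * s ≤ ε * Real.exp (k * (s - t1)) := by
    intro ε hε
    have l1 : Tendsto (fun s : ℝ => k * (s - t1)) atTop atTop :=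
      (tendsto_atTop_add_const_right _ (-t1) tendsto_id).const_mul_atTop hk
    have l2 : Tendsto (fun s : ℝ => (A + B * t1 + (B / k) * s) * Real.exp (-s)) atTop (𝓝 0) := by
      have a1 := (Real.tendsto_pow_mul_exp_neg_atTop_nhds_zero 1).const_mul (B / k)
      have a0 := (Real.tendsto_pow_mul_exp_neg_atTop_nhds_zero 0).const_mul (A + B * t1)
      have := a0.add a1
      simp only [mul_zero, add_zero] at this
      refine this.congr fun s => ?_
      ring
    have l3 := (l2.comp l1).eventually (gt_mem_nhds hε)
    filter_upwards [l3] with s hs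
    simp only [Function.comp] at hs
    rw [Real.exp_neg, ← div_eq_mul_inv, div_lt_iff₀ (Real.exp_pos _)] at hs
    refine le_trans (le_of_eq ?_) hs.le
    field_simp
    ring
  have hS : 0 ≤ 16 / (t1 - T)^2 * (2 * π) := by positivity
  have hA0 : 0 ≤ A + B * t1 := by have : 0 ≤ t1 := by linarith
                                  positivity
  have up := max_princ hk d1 d2 hS (fun s hs => (abs_le.1 (bE s hs)).1)
    ((abs_le.1 (bg t1 le_rfl)).2) hA0 (fun ε hε => by
      filter_upwards [gr ε hε, eventually_ge_atTop t1] with s hs hs'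
      exact (abs_le.1 (bg s hs')).2.trans hs) t ht
  have lo := max_princ (g := fun s => - g s) (g1 := fun s => - g1 s) (E := fun s => - E s) hk
    (fun s hs => (d1 s hs).neg) (fun s hs => ((d2 s hs).neg).congr_deriv (by ring)) hS
    (fun s hs => by have := (abs_le.1 (bE s hs)).2; linarith)
    (by have := (abs_le.1 (bg t1 le_rfl)).1; linarith) hA0 (fun ε hε => by
      filter_upwards [gr ε hε, eventually_ge_atTop t1] with s hs hs'
      have := (abs_le.1 (bg s hs')).1
      linarith) t ht
  rw [abs_le]
  exact ⟨by linarith, up⟩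

lemma fourier_osc {f : ℝ → ℝ} (hf : Continuous f) (per : ∀ x, f (x + 2 * π) = f x) {δ : ℝ}
    (hcos : ∀ k : ℕ, 0 < k → |∫ θ in (0:ℝ)..(2 * π), f θ * Real.cos (k * θ)| ≤ δ / (k:ℝ)^2)
    (hsin : ∀ k : ℕ, 0 < k → |∫ θ in (0:ℝ)..(2 * π), f θ * Real.sin (k * θ)| ≤ δ / (k:ℝ)^2)
    (x : ℝ) :
    |f x - (1 / (2 * π)) * ∫ θ in (0:ℝ)..(2 * π), f θ| ≤
      (∑' k : ℤ, 1 / (k:ℝ)^2) * δ := by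
  have : Fact (0 < 2 * π) := ⟨by positivity⟩
  have hper : Function.Periodic (fun x => (f x : ℂ)) (2 * π) := fun x => by simp [per x]
  set F : C(AddCircle (2 * π), ℂ) := ⟨hper.lift, by
    refine continuous_coinduced_dom.2 ?_
    show Continuous fun x : ℝ => hper.lift (x : AddCircle (2 * π))
    simp only [Function.Periodic.lift_coe]
    fun_prop⟩ with hF
  have hFx : ∀ x : ℝ, F (x : AddCircle (2*π)) = (f x : ℂ) := fun x => by
    simp [hF, Function.Periodic.lift_coe]
  have coef : ∀ n : ℤ, fourierCoeff F n = (1 / (2 * π) : ℝ) •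
      (((∫ θ in (0:ℝ)..(2 * π), f θ * Real.cos (n * θ) : ℝ) : ℂ) -
       ((∫ θ in (0:ℝ)..(2 * π), f θ * Real.sin (n * θ) : ℝ) : ℂ) * Complex.I) := by
    intro n
    rw [fourierCoeff_eq_intervalIntegral _ n 0, zero_add]
    congr 1
    rw [← intervalIntegral.integral_ofReal, ← intervalIntegral.integral_ofReal,
      ← intervalIntegral.integral_mul_const, ← intervalIntegral.integral_sub]
    · congr 1
      ext θ
      rw [hFx, fourier_coe_apply]
      have : (2 * π * Complex.I * ((-n : ℤ) : ℂ) * θ / ((2 * π : ℝ) : ℂ)) =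
          ((-(n * θ) : ℝ) : ℂ) * Complex.I := by
        have : (π : ℂ) ≠ 0 := by exact_mod_cast Real.pi_ne_zero
        push_cast; field_simp
      rw [this, Complex.exp_mul_I, ← Complex.ofReal_cos, ← Complex.ofReal_sin, Real.cos_neg,
        Real.sin_neg, smul_eq_mul]
      push_cast; ring
    · exact Continuous.intervalIntegrable (by fun_prop) _ _
    · exact Continuous.intervalIntegrable (by fun_prop) _ _
  have coef0 : fourierCoeff F 0 = (((1 / (2 * π)) * ∫ θ in (0:ℝ)..(2 * π), f θ : ℝ) : ℂ) := by
    rw [coef 0]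
    simp
  have bnd : ∀ n : ℤ, n ≠ 0 → ‖fourierCoeff F n‖ ≤ 1 / (n:ℝ)^2 * δ := by
    intro n hn
    obtain ⟨k, hk⟩ : ∃ k : ℕ, n = k ∨ n = -k := ⟨n.natAbs, Int.natAbs_eq n⟩
    have hk0 : 0 < k := by
      rcases Nat.eq_zero_or_pos k with h | h
      · subst h; simp at hk; exact absurd hk hn
      · exact h
    have hn2 : (n:ℝ)^2 = (k:ℝ)^2 := by rcases hk with h | h <;> rw [h] <;> simp
    have h1 : |∫ θ in (0:ℝ)..(2 * π), f θ * Real.cos (n * θ)| ≤ δ / (k:ℝ)^2 := by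
      rcases hk with h | h
      · rw [h]; simpa using hcos k hk0
      · rw [h]; simpa using hcos k hk0
    have h2 : |∫ θ in (0:ℝ)..(2 * π), f θ * Real.sin (n * θ)| ≤ δ / (k:ℝ)^2 := by
      rcases hk with h | h
      · rw [h]; simpa using hsin k hk0
      · rw [h]; simpa using hsin k hk0
    rw [coef n, norm_smul, hn2]
    have h3 : ‖(1 / (2 * π) : ℝ)‖ ≤ 1 / 2 := by
      rw [Real.norm_eq_abs, abs_of_pos (by positivity)]
      have := Real.pi_gt_three
      apply one_div_le_one_div_of_le <;> linarith
    have h4 : ‖(((∫ θ in (0:ℝ)..(2 * π), f θ * Real.cos (n * θ) : ℝ) : ℂ) -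
       ((∫ θ in (0:ℝ)..(2 * π), f θ * Real.sin (n * θ) : ℝ) : ℂ) * Complex.I)‖ ≤
       δ / (k:ℝ)^2 + δ / (k:ℝ)^2 := by
      refine (norm_sub_le _ _).trans (add_le_add ?_ ?_)
      · rw [Complex.norm_real]; exact h1
      · rw [norm_mul, Complex.norm_I, mul_one, Complex.norm_real]; exact h2
    calc _ ≤ 1 / 2 * (δ / (k:ℝ)^2 + δ / (k:ℝ)^2) := by gcongr
      _ = _ := by ring
  have sum0 : Summable (fun k : ℤ => 1 / (k:ℝ)^2 * δ) :=
    (Real.summable_one_div_int_pow.2 (by norm_num)).mul_right δ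
  have summ : Summable (fourierCoeff F) := by
    refine Summable.of_norm_bounded_eventually sum0 ?_
    rw [Filter.eventually_cofinite]
    refine (Set.finite_singleton (0:ℤ)).subset fun n hn => ?_
    by_contra h
    exact hn (bnd n h)
  have hs := has_pointwise_sum_fourier_series_of_summable summ (x : AddCircle (2*π))
  rw [hFx] at hs
  have hs2 := hs.sub (hasSum_ite_eq (0:ℤ) (fourierCoeff F 0))
  have key : ‖(f x : ℂ) - fourierCoeff F 0‖ ≤ ∑' k : ℤ, 1 / (k:ℝ)^2 * δ := by
    refine tsum_of_norm_bounded (sum0.hasSum) (fun n => ?_) |> fun h => hs2.tsum_eq ▸ h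
    by_cases hn : n = 0
    · subst hn; simp
    · simp only [hn, if_false, sub_zero, norm_smul]
      have : ‖fourier n (x : AddCircle (2*π))‖ = 1 := by
        rw [fourier_apply]; exact Circle.norm_coe _
      rw [this, mul_one]
      exact bnd n hn
  rw [tsum_mul_right, coef0, ← Complex.ofReal_sub, Complex.norm_real] at key
  exact key

lemma Cyl.osc {U P PP Q QQ H : ℝ → ℝ → ℝ} (h : Cyl U P PP Q QQ H) {T : ℝ} (hT : 0 < T)
    (hH : ∀ t, T ≤ t → ∀ θ, 1/2 ≤ H t θ ∧ H t θ ≤ 2) :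
    ∀ ε > 0, ∃ T', ∀ t, T' ≤ t → ∀ θ,
      |U t θ - (1 / (2 * π)) * ∫ x in (0:ℝ)..(2 * π), U t x| ≤ ε := by
  obtain ⟨A, B, hA, hB, hAB⟩ := h.growth hT hH
  set δ : ℝ → ℝ := fun t => 16 / (t/2 - T)^2 * (2 * π) + (A + B * (t/2)) * (8 / t^2) with hδ
  have hδlim : Tendsto (fun t => (∑' k : ℤ, 1 / (k:ℝ)^2) * δ t) atTop (𝓝 0) := by
    have i1 : Tendsto (fun t : ℝ => (t/2 - T)⁻¹) atTop (𝓝 0) :=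
      tendsto_inv_atTop_zero.comp
        (tendsto_atTop_add_const_right _ (-T) (tendsto_id.atTop_div_const (by norm_num)))
    have i2 : Tendsto (fun t : ℝ => t⁻¹) atTop (𝓝 0) := tendsto_inv_atTop_zero
    have : Tendsto (fun t : ℝ => 16 * ((t/2-T)⁻¹)^2 * (2*π) + (A * 8 * (t⁻¹)^2 + B * 4 * t⁻¹)) atTop
        (𝓝 (16 * 0^2 * (2*π) + (A * 8 * 0^2 + B * 4 * 0))) :=
      ((((i1.pow 2).const_mul 16).mul_const _)).add
        (((i2.pow 2).const_mul _).add (i2.const_mul _))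
    have h2 : Tendsto δ atTop (𝓝 0) := by
      have e : (16 * 0^2 * (2*π) + (A * 8 * 0^2 + B * 4 * 0)) = 0 := by ring
      rw [e] at this
      refine this.congr' ?_
      filter_upwards [eventually_gt_atTop 0] with t ht
      simp only [hδ]
      field_simp
      ring
    have h3 := h2.const_mul (∑' k : ℤ, 1 / (k:ℝ)^2)
    rwa [mul_zero] at h3
  intro ε hε
  have ev := (hδlim.eventually (gt_mem_nhds hε)).and (eventually_ge_atTop (2 * (T + 3)))
  obtain ⟨T', hT'⟩ := eventually_atTop.1 ev
  refine ⟨T', fun t ht θ => ?_⟩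
  obtain ⟨h1, h2⟩ := hT' t ht
  have ht0 : 0 < t := by linarith
  refine le_trans (fourier_osc (Cyl.slice h.cU ht0) (fun x => h.perU t x ht0) (δ := δ t)
    (fun k hk => ?_) (fun k hk => ?_) θ) h1.le
  all_goals
    have hk' : (0:ℝ) < k := by exact_mod_cast hk
    have dcos : ∀ x : ℝ, HasDerivAt (fun x => Real.cos (k * x)) (-(k * Real.sin (k * x))) x := by
      intro x
      have := ((hasDerivAt_id x).const_mul (k:ℝ)).cos
      refine this.congr_deriv ?_
      simp; ring
    have dsin : ∀ x : ℝ, HasDerivAt (fun x => Real.sin (k * x)) (k * Real.cos (k * x)) x := by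
      intro x
      have := ((hasDerivAt_id x).const_mul (k:ℝ)).sin
      refine this.congr_deriv ?_
      simp; ring
    have e1 : Real.exp (-k * (t - t/2)) ≤ 8 / t^2 / (k:ℝ)^2 := by
      have := Real.quadratic_le_exp_of_nonneg (x := k * (t/2)) (by positivity)
      rw [show -(k:ℝ) * (t - t/2) = -(k * (t/2)) by ring, Real.exp_neg,
        show 8 / t^2 / (k:ℝ)^2 = ((k * (t/2))^2/2)⁻¹ by field_simp; norm_num]
      apply inv_anti₀ (by positivity)
      have : 0 ≤ k * (t/2) := by positivity
      linarith
    have pcos : Real.cos (k * (2 * π)) = Real.cos (k * 0) := by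
      simp [Real.cos_nat_mul_two_pi]
    have psin : Real.sin (k * (2 * π)) = Real.sin (k * 0) := by
      have := Real.sin_nat_mul_pi (2 * k)
      push_cast at this
      rw [mul_zero, Real.sin_zero, ← this]; ring_nf
    have fin : (16 / (t/2 - T)^2 * (2 * π)) / (k:ℝ)^2 + (A + B * (t/2)) * Real.exp (-k * (t - t/2)) ≤
        δ t / (k:ℝ)^2 := by
      simp only [hδ]
      rw [add_div]
      have : 0 ≤ A + B * (t/2) := by positivity
      have := mul_le_mul_of_nonneg_left e1 this
      refine add_le_add_right (this.trans (le_of_eq ?_)) _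
      ring
    refine le_trans ?_ fin
  · refine h.coef_bound hT hH hA hB hAB hk' dcos (fun x => ?_) pcos ?_
      (fun x => Real.abs_cos_le_one _) (by linarith) (by linarith)
    · exact (((dsin x).const_mul (k:ℝ)).neg).congr_deriv (by ring)
    · rw [psin]
  · refine h.coef_bound hT hH hA hB hAB hk' dsin (fun x => ?_) psin ?_
      (fun x => Real.abs_sin_le_one _) (by linarith) (by linarith)
    · exact ((dcos x).const_mul (k:ℝ)).congr_deriv (by ring)
    · rw [pcos]

lemma Cyl.main {U P PP Q QQ H : ℝ → ℝ → ℝ} (h : Cyl U P PP Q QQ H) :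
    (∃ a > 0, ∃ c, ∀ ε > 0, ∃ T, ∀ t, T ≤ t → ∀ θ, |U t θ + a * t - c| ≤ ε) ∨
    (∀ ε > 0, ∃ T, ∀ t, T ≤ t → ∀ θ, |U t θ + Real.log t| ≤ ε) := by
  have hpi : (0:ℝ) < 2 * π := by positivity
  obtain ⟨T0, hT0⟩ := h.limH (1/2) (by norm_num)
  set T := max T0 1 with hTdef
  have hT : 0 < T := lt_of_lt_of_le one_pos (le_max_right _ _)
  have hH : ∀ t, T ≤ t → ∀ θ, 1/2 ≤ H t θ ∧ H t θ ≤ 2 := by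
    intro t ht θ
    have := abs_le.1 (hT0 t ((le_max_left _ _).trans ht) θ)
    constructor <;> linarith [this.1, this.2]
  have osc := h.osc hT hH
  set M : ℝ → ℝ := fun t => (1 / (2 * π)) * ∫ x in (0:ℝ)..(2 * π), U t x with hM
  set N : ℝ → ℝ := fun t => (1 / (2 * π)) * ∫ x in (0:ℝ)..(2 * π), P t x with hN
  set R : ℝ → ℝ := fun t => (1 / (2 * π)) * ∫ x in (0:ℝ)..(2 * π), H t x * Real.exp (2 * U t x)
    with hR
  have hbot : Tendsto M atTop atBot := by
    have u0 : Tendsto (fun t => 2 * U t 0) atTop atBot := by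
      rw [← Real.tendsto_exp_comp_nhds_zero]
      have i1 : Tendsto (fun t : ℝ => (t - T)⁻¹) atTop (𝓝 0) :=
        tendsto_inv_atTop_zero.comp (tendsto_atTop_add_const_right _ (-T) tendsto_id)
      have i2 : Tendsto (fun t : ℝ => 8 / (t - T)^2) atTop (𝓝 0) := by
        have := (i1.pow 2).const_mul 8
        simpa [div_eq_mul_inv] using this
      refine squeeze_zero' (Eventually.of_forall fun t => (Real.exp_pos _).le) ?_ i2
      filter_upwards [eventually_gt_atTop T] with t ht
      exact h.upper hT (fun t ht θ => (hH t ht θ).1) t 0 ht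
    have u1 : Tendsto (fun t => U t 0 + 1) atTop atBot := by
      refine tendsto_atBot_add_const_right _ _ ?_
      have := u0.const_mul_atBot (show (0:ℝ) < 1/2 by norm_num)
      refine this.congr fun t => by ring
    refine tendsto_atBot_mono' _ ?_ u1
    obtain ⟨T', hT'⟩ := osc 1 one_pos
    filter_upwards [eventually_ge_atTop T'] with t ht
    have := abs_le.1 (hT' t ht 0)
    linarith [this.1]
  have hRlim : Tendsto (fun t => R t * Real.exp (-2 * M t)) atTop (𝓝 1) := by
    rw [Metric.tendsto_atTop]
    intro ε hε
    have cont : ContinuousAt (fun p : ℝ × ℝ => p.1 * Real.exp (2 * p.2)) (1, 0) := by fun_prop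
    obtain ⟨η, hη, hηb⟩ := Metric.continuousAt_iff.1 cont (ε/2) (by positivity)
    obtain ⟨T1, hT1⟩ := h.limH (η/2) (by positivity)
    obtain ⟨T2, hT2⟩ := osc (η/2) (by positivity)
    refine ⟨max (max T1 T2) 1, fun t ht => ?_⟩
    have ht1 : T1 ≤ t := ((le_max_left _ _).trans (le_max_left _ _)).trans ht
    have ht2 : T2 ≤ t := ((le_max_right _ _).trans (le_max_left _ _)).trans ht
    have ht0 : 0 < t := lt_of_lt_of_le one_pos ((le_max_right _ _).trans ht)
    have pt : ∀ θ, |H t θ * Real.exp (2 * (U t θ - M t)) - 1| ≤ ε / 2 := by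
      intro θ
      have := hηb (x := (H t θ, U t θ - M t)) (by
        rw [Prod.dist_eq, Real.dist_eq, Real.dist_eq, sub_zero]
        have a := hT1 t ht1 θ
        have b := hT2 t ht2 θ
        refine max_lt ?_ ?_
        · simp only; linarith
        · simp only; exact lt_of_le_of_lt b (by linarith))
      rw [Real.dist_eq] at this
      simpa using this.le
    have cUt := Cyl.slice h.cU ht0
    have cHe : Continuous (fun θ => H t θ * Real.exp (2 * U t θ)) := by
      have : (fun θ => H t θ * Real.exp (2 * U t θ)) = fun θ => PP t θ + QQ t θ := by
        ext θ; rw [h.pde t θ ht0]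
      rw [this]
      exact (Cyl.slice h.cPP ht0).add (Cyl.slice h.cQQ ht0)
    have e1 : R t * Real.exp (-2 * M t) - 1 = (1 / (2 * π)) *
        ∫ x in (0:ℝ)..(2 * π), (H t x * Real.exp (2 * (U t x - M t)) - 1) := by
      have : ∀ x, H t x * Real.exp (2 * (U t x - M t)) =
          (H t x * Real.exp (2 * U t x)) * Real.exp (-2 * M t) := fun x => by
        rw [mul_assoc, ← Real.exp_add]; congr 2; ring
      simp_rw [this]
      have cHe2 : Continuous (fun θ => H t θ * Real.exp (2 * U t θ) * Real.exp (-2 * M t)) :=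
        cHe.mul continuous_const
      rw [intervalIntegral.integral_sub (cHe2.intervalIntegrable _ _)
        intervalIntegrable_const, intervalIntegral.integral_mul_const]
      simp only [hR, intervalIntegral.integral_const, sub_zero, smul_eq_mul, mul_one]
      field_simp
    rw [Real.dist_eq, e1, abs_mul, abs_of_pos (by positivity : 0 < 1 / (2 * π))]
    have := intervalIntegral.norm_integral_le_of_norm_le_const (a := 0) (b := 2 * π)
      (C := ε/2) (f := fun x => (H t x * Real.exp (2 * (U t x - M t)) - 1)) (fun θ _ => pt θ)
    rw [sub_zero, abs_of_pos hpi, Real.norm_eq_abs] at this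
    calc _ ≤ 1 / (2 * π) * (ε / 2 * (2 * π)) := by gcongr
      _ = ε / 2 := by field_simp
      _ < ε := by linarith
  rcases ode_asymp (T := 0) (fun t ht => ((h.mean_ode ht).1).const_mul (1 / (2 * π)))
    (fun t ht => ((h.mean_ode ht).2).const_mul (1 / (2 * π))) hRlim hbot with ⟨a, ha, c, hc⟩ | hl
  · left
    refine ⟨a, ha, c, fun ε hε => ?_⟩
    obtain ⟨T1, hT1⟩ := (Metric.tendsto_atTop.1 hc) (ε/2) (by positivity)
    obtain ⟨T2, hT2⟩ := osc (ε/2) (by positivity)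
    refine ⟨max T1 T2, fun t ht θ => ?_⟩
    have h1 := hT1 t ((le_max_left _ _).trans ht)
    have h2 := hT2 t ((le_max_right _ _).trans ht) θ
    rw [Real.dist_eq] at h1
    have h3 := abs_le.1 h1.le
    have h4 := abs_le.1 h2
    rw [abs_le]
    constructor <;> linarith [h3.1, h3.2, h4.1, h4.2]
  · right
    intro ε hε
    obtain ⟨T1, hT1⟩ := (Metric.tendsto_atTop.1 hl) (ε/2) (by positivity)
    obtain ⟨T2, hT2⟩ := osc (ε/2) (by positivity)
    refine ⟨max T1 T2, fun t ht θ => ?_⟩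
    have h1 := hT1 t ((le_max_left _ _).trans ht)
    have h2 := hT2 t ((le_max_right _ _).trans ht) θ
    rw [Real.dist_eq, sub_zero] at h1
    have h3 := abs_le.1 h1.le
    have h4 := abs_le.1 h2
    rw [abs_le]
    constructor <;> linarith [h3.1, h3.2, h4.1, h4.2]

lemma isOpen_PDisc : IsOpen PDisc :=
  (isOpen_lt continuous_const continuous_norm).inter (isOpen_lt continuous_norm continuous_const)

lemma lap_eq {u : ℂ → ℝ} (hu : ContDiffOn ℝ 2 u PDisc) {z : ℂ} (hz : z ∈ PDisc) :
    lap u z = fderiv ℝ (fderiv ℝ u) z 1 1 + fderiv ℝ (fderiv ℝ u) z Complex.I Complex.I := by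
  have hD : ∀ w ∈ PDisc, HasFDerivAt u (fderiv ℝ u w) w := fun w hw =>
    ((hu.differentiableOn (by norm_num)).differentiableAt (isOpen_PDisc.mem_nhds hw)).hasFDerivAt
  have hu1 : ContDiffOn ℝ 1 (fderiv ℝ u) PDisc := hu.fderiv_of_isOpen isOpen_PDisc (by norm_num)
  have hD2 : ∀ w ∈ PDisc, HasFDerivAt (fderiv ℝ u) (fderiv ℝ (fderiv ℝ u) w) w := fun w hw =>
    ((hu1.differentiableOn (by norm_num)).differentiableAt (isOpen_PDisc.mem_nhds hw)).hasFDerivAt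
  have line : ∀ (e w : ℂ) (s : ℝ), HasDerivAt (fun t : ℝ => w + (t:ℂ) * e) e s := fun e w s => by
    have := ((Complex.ofRealCLM.hasDerivAt (x := s)).mul_const e).const_add w
    simpa using this
  have gen : ∀ e : ℂ, deriv (fun t : ℝ => (fun w => deriv (fun s : ℝ => u (w + s * e)) 0) (z + t * e)) 0
      = fderiv ℝ (fderiv ℝ u) z e e := by
    intro e
    have inner : ∀ w ∈ PDisc, deriv (fun s : ℝ => u (w + s * e)) 0 = fderiv ℝ u w e := fun w hw => by
      refine HasDerivAt.deriv ?_
      refine HasFDerivAt.comp_hasDerivAt (f := fun s : ℝ => w + s * e) (0:ℝ) ?_ (line e w 0)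
      simpa using hD w hw
    have ev : (fun t : ℝ => (fun w => deriv (fun s : ℝ => u (w + s * e)) 0) (z + t * e)) =ᶠ[𝓝 0]
        fun t : ℝ => fderiv ℝ u (z + t * e) e := by
      have c : ContinuousAt (fun t : ℝ => z + (t:ℂ) * e) 0 := (line e z 0).continuousAt
      have : ∀ᶠ t : ℝ in 𝓝 0, z + (t:ℂ) * e ∈ PDisc :=
        c.eventually (isOpen_PDisc.mem_nhds (by simpa using hz))
      filter_upwards [this] with t ht using inner _ ht
    rw [ev.deriv_eq]
    refine HasDerivAt.deriv ?_
    have h1 : HasDerivAt (fun t : ℝ => fderiv ℝ u (z + t * e)) (fderiv ℝ (fderiv ℝ u) z e) 0 := by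
      refine HasFDerivAt.comp_hasDerivAt (f := fun s : ℝ => z + s * e) (0:ℝ) ?_ (line e z 0)
      simpa using hD2 z hz
    have := h1.clm_apply (hasDerivAt_const (0:ℝ) e)
    simpa using this
  have g1 := gen 1
  have g2 := gen Complex.I
  simp only [mul_one] at g1
  unfold lap pdx pdy
  rw [← g1, ← g2]

/-- Polar/exponential coordinates. -/
noncomputable def zc (t θ : ℝ) : ℂ := Complex.exp (-(t:ℂ) + θ * Complex.I)

lemma norm_zc (t θ : ℝ) : ‖zc t θ‖ = Real.exp (-t) := by
  simp [zc, Complex.norm_exp]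

lemma zc_mem {t : ℝ} (ht : 0 < t) (θ : ℝ) : zc t θ ∈ PDisc := by
  constructor
  · rw [norm_zc]; exact Real.exp_pos _
  · rw [norm_zc]; rw [Real.exp_lt_one_iff]; linarith

lemma dzc_t (t θ : ℝ) : HasDerivAt (fun s => zc s θ) (-zc t θ) t := by
  have := (((Complex.ofRealCLM.hasDerivAt (x := t)).neg).add_const ((θ:ℂ) * Complex.I)).cexp
  simpa [zc] using! this

lemma dzc_θ (t θ : ℝ) : HasDerivAt (fun s => zc t s) (Complex.I * zc t θ) θ := by
  have := (((Complex.ofRealCLM.hasDerivAt (x := θ)).mul_const Complex.I).const_add (-(t:ℂ))).cexp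
  simpa [zc, mul_comm] using! this

lemma zc_per (t θ : ℝ) : zc t (θ + 2 * π) = zc t θ := by
  unfold zc
  push_cast
  rw [add_mul, ← add_assoc, Complex.exp_add _ (2 * π * Complex.I), Complex.exp_two_pi_mul_I, mul_one]

lemma zc_log {z : ℂ} (hz : z ∈ PDisc) : zc (-Real.log ‖z‖) (Complex.arg z) = z := by
  have h0 : z ≠ 0 := norm_pos_iff.1 hz.1
  unfold zc
  conv_rhs => rw [← Complex.exp_log h0]
  rw [Complex.log]
  push_cast
  rw [neg_neg]

lemma cont_zc : Continuous (fun p : ℝ × ℝ => zc p.1 p.2) := by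
  unfold zc; fun_prop

lemma cyl_of_pde (Ξ₀ G : ℂ → ℂ) (n : ℤ)
    (hGhol : DifferentiableOn ℂ G (Metric.ball (0 : ℂ) 1))
    (hG0 : G 0 ≠ 0)
    (hord : ∀ z ∈ PDisc, Ξ₀ z = z ^ n * G z)
    (u : ℂ → ℝ) (hu : ContDiffOn ℝ 2 u PDisc)
    (hpde : ∀ z ∈ PDisc, lap u z = 16 * ‖Ξ₀ z‖ ^ 2 * Real.exp (2 * u z)) :
    ∃ P PP Q QQ H, Cyl (fun t θ => u (zc t θ) + (-((n:ℝ) + 1) * t + (Real.log 4 + Real.log ‖G 0‖)))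
      P PP Q QQ H := by
  have hD : ∀ w ∈ PDisc, HasFDerivAt u (fderiv ℝ u w) w := fun w hw =>
    ((hu.differentiableOn (by norm_num)).differentiableAt (isOpen_PDisc.mem_nhds hw)).hasFDerivAt
  have hu1 : ContDiffOn ℝ 1 (fderiv ℝ u) PDisc := hu.fderiv_of_isOpen isOpen_PDisc (by norm_num)
  have hD2 : ∀ w ∈ PDisc, HasFDerivAt (fderiv ℝ u) (fderiv ℝ (fderiv ℝ u) w) w := fun w hw =>
    ((hu1.differentiableOn (by norm_num)).differentiableAt (isOpen_PDisc.mem_nhds hw)).hasFDerivAt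
  have c1 : ContinuousOn (fderiv ℝ u) PDisc := hu1.continuousOn
  have c2 : ContinuousOn (fderiv ℝ (fderiv ℝ u)) PDisc :=
    hu1.continuousOn_fderiv_of_isOpen isOpen_PDisc (by norm_num)
  have mz : MapsTo (fun p : ℝ × ℝ => zc p.1 p.2) (Ioi 0 ×ˢ univ) PDisc := fun p hp => zc_mem hp.1 _
  have c0' : ContinuousOn (fun p : ℝ × ℝ => u (zc p.1 p.2)) (Ioi 0 ×ˢ univ) :=
    hu.continuousOn.comp cont_zc.continuousOn mz
  have c1' : ContinuousOn (fun p : ℝ × ℝ => fderiv ℝ u (zc p.1 p.2)) (Ioi 0 ×ˢ univ) :=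
    c1.comp cont_zc.continuousOn mz
  have c2' : ContinuousOn (fun p : ℝ × ℝ => fderiv ℝ (fderiv ℝ u) (zc p.1 p.2)) (Ioi 0 ×ˢ univ) :=
    c2.comp cont_zc.continuousOn mz
  have dt : ∀ t θ, 0 < t → HasDerivAt (fun s => u (zc s θ)) (fderiv ℝ u (zc t θ) (-zc t θ)) t :=
    fun t θ ht => (hD _ (zc_mem ht θ)).comp_hasDerivAt (f := fun s => zc s θ) t (dzc_t t θ)
  have dθ : ∀ t θ, 0 < t → HasDerivAt (fun s => u (zc t s))
      (fderiv ℝ u (zc t θ) (Complex.I * zc t θ)) θ :=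
    fun t θ ht => (hD _ (zc_mem ht θ)).comp_hasDerivAt (f := fun s => zc t s) θ (dzc_θ t θ)
  have dt2 : ∀ t θ, 0 < t → HasDerivAt (fun s => fderiv ℝ u (zc s θ))
      (fderiv ℝ (fderiv ℝ u) (zc t θ) (-zc t θ)) t :=
    fun t θ ht => (hD2 _ (zc_mem ht θ)).comp_hasDerivAt (f := fun s => zc s θ) t (dzc_t t θ)
  have dθ2 : ∀ t θ, 0 < t → HasDerivAt (fun s => fderiv ℝ u (zc t s))
      (fderiv ℝ (fderiv ℝ u) (zc t θ) (Complex.I * zc t θ)) θ :=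
    fun t θ ht => (hD2 _ (zc_mem ht θ)).comp_hasDerivAt (f := fun s => zc t s) θ (dzc_θ t θ)
  have cz : ContinuousOn (fun p : ℝ × ℝ => zc p.1 p.2) (Ioi 0 ×ˢ univ) := cont_zc.continuousOn
  refine ⟨fun t θ => fderiv ℝ u (zc t θ) (-zc t θ) + (-((n:ℝ) + 1)),
    fun t θ => fderiv ℝ (fderiv ℝ u) (zc t θ) (-zc t θ) (-zc t θ) + fderiv ℝ u (zc t θ) (zc t θ),
    fun t θ => fderiv ℝ u (zc t θ) (Complex.I * zc t θ),
    fun t θ => fderiv ℝ (fderiv ℝ u) (zc t θ) (Complex.I * zc t θ) (Complex.I * zc t θ) +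
      fderiv ℝ u (zc t θ) (-zc t θ),
    fun t θ => ‖G (zc t θ)‖^2 / ‖G 0‖^2, ?_⟩
  constructor
  · exact c0'.add (by fun_prop)
  · exact (c1'.clm_apply cz.neg).add continuousOn_const
  · exact ((c2'.clm_apply cz.neg).clm_apply cz.neg).add (c1'.clm_apply cz)
  · exact ((c2'.clm_apply (continuousOn_const.mul cz)).clm_apply (continuousOn_const.mul cz)).add
      (c1'.clm_apply cz.neg)
  · intro t θ ht
    refine (dt t θ ht).add ?_
    have := ((hasDerivAt_id t).const_mul (-((n:ℝ) + 1))).add_const (Real.log 4 + Real.log ‖G 0‖)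
    rw [mul_one] at this
    exact this
  · intro t θ ht
    have dz : HasDerivAt (fun s => -zc s θ) (zc t θ) t := by
      have := (dzc_t t θ).neg
      rwa [neg_neg] at this
    exact ((dt2 t θ ht).clm_apply dz).add_const _
  · intro t θ ht
    exact (dθ t θ ht).add_const _
  · intro t θ ht
    have dz : HasDerivAt (fun s => Complex.I * zc t s) (-zc t θ) θ := by
      have := (dzc_θ t θ).const_mul Complex.I
      rwa [← mul_assoc Complex.I Complex.I, Complex.I_mul_I, neg_one_mul] at this
    exact (dθ2 t θ ht).clm_apply dz
  · intro t θ ht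
    simp only [zc_per]
  · intro t θ ht
    simp only [zc_per]
  · intro t θ ht
    have hz := zc_mem ht θ
    have hlap := lap_eq hu hz
    rw [hpde _ hz, hord _ hz] at hlap
    have hn := norm_zc t θ
    generalize zc t θ = z at *
    have hz0 : z ≠ 0 := norm_pos_iff.1 hz.1
    set B := fderiv ℝ (fderiv ℝ u) z with hB
    have e1 : z = z.re • (1:ℂ) + z.im • Complex.I := by
      simp [Complex.re_add_im]
    have e2 : Complex.I * z = (-z.im) • (1:ℂ) + z.re • Complex.I := by
      apply Complex.ext <;> simp
    have q1 : B (-z) (-z) = z.re^2 * B 1 1 + z.re * z.im * (B 1 Complex.I + B Complex.I 1) +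
        z.im^2 * B Complex.I Complex.I := by
      have : B (-z) (-z) = B z z := by simp
      rw [this]
      conv_lhs => rw [e1]
      simp only [map_add, map_smul, ContinuousLinearMap.add_apply, ContinuousLinearMap.smul_apply,
        smul_eq_mul]
      ring
    have q2 : B (Complex.I * z) (Complex.I * z) = z.im^2 * B 1 1 -
        z.re * z.im * (B 1 Complex.I + B Complex.I 1) + z.re^2 * B Complex.I Complex.I := by
      rw [e2]
      simp only [map_add, map_smul, ContinuousLinearMap.add_apply, ContinuousLinearMap.smul_apply,
        smul_eq_mul]
      ring
    have q3 : fderiv ℝ u z (-z) = - fderiv ℝ u z z := map_neg _ _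
    have nsq : ‖z‖^2 = z.re^2 + z.im^2 := by
      rw [← Complex.normSq_eq_norm_sq, Complex.normSq_apply]; ring
    have lhs : B (-z) (-z) + fderiv ℝ u z z + (B (Complex.I * z) (Complex.I * z) +
        fderiv ℝ u z (-z)) = ‖z‖^2 * (B 1 1 + B Complex.I Complex.I) := by
      rw [q1, q2, q3, nsq]; ring
    show B (-z) (-z) + fderiv ℝ u z z + (B (Complex.I * z) (Complex.I * z) +
        fderiv ℝ u z (-z)) = _
    rw [lhs, ← hlap, norm_mul, norm_zpow]
    have hg : 0 < ‖G 0‖ := norm_pos_iff.2 hG0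
    have ex : Real.exp (2 * (u z + (-((n:ℝ) + 1) * t + (Real.log 4 + Real.log ‖G 0‖)))) =
        Real.exp (2 * u z) * ((‖z‖^n)^2 * ‖z‖^2) * (16 * ‖G 0‖^2) := by
      have a1 : (‖z‖^n)^2 = Real.exp (2 * (-(n * t))) := by
        rw [hn, ← Real.rpow_intCast, ← Real.exp_mul, ← Real.exp_nat_mul]; congr 1; push_cast; ring
      have a2 : ‖z‖^2 = Real.exp (2 * (-t)) := by
        rw [hn, ← Real.exp_nat_mul]; congr 1
      have a3 : 16 * ‖G 0‖^2 = Real.exp (2 * (Real.log 4 + Real.log ‖G 0‖)) := by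
        rw [← Real.log_mul (by norm_num) hg.ne',
          show 2 * Real.log (4 * ‖G 0‖) = ((2:ℕ):ℝ) * Real.log (4 * ‖G 0‖) by norm_num,
          Real.exp_nat_mul, Real.exp_log (by positivity)]
        ring
      rw [a1, a2, a3, ← Real.exp_add, ← Real.exp_add, ← Real.exp_add]
      congr 1; ring
    simp only [ex]
    field_simp
  · intro ε hε
    have hg : 0 < ‖G 0‖ := norm_pos_iff.2 hG0
    have cG : ContinuousAt G 0 :=
      (hGhol.differentiableAt (Metric.ball_mem_nhds 0 one_pos)).continuousAt
    have cH : ContinuousAt (fun z => ‖G z‖^2 / ‖G 0‖^2) 0 := by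
      exact (cG.norm.pow 2).div_const _
    obtain ⟨δ, hδ, hδb⟩ := Metric.continuousAt_iff.1 cH ε hε
    refine ⟨-Real.log δ + 1, fun t ht θ => ?_⟩
    have := hδb (x := zc t θ) (by
      rw [dist_zero_right, norm_zc, ← Real.exp_log hδ]
      exact Real.exp_lt_exp.2 (by linarith))
    rw [Real.dist_eq, div_self (by positivity)] at this
    exact this.le

lemma extend_cont {v0 : ℂ → ℝ} (hv : ContinuousOn v0 PDisc) {L : ℝ}
    (h : ∀ ε > 0, ∃ T, ∀ z ∈ PDisc, T ≤ -Real.log ‖z‖ → |v0 z - L| ≤ ε) :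
    ContinuousOn (Function.update v0 0 L) (Metric.ball (0:ℂ) 1) := by
  intro z hz
  refine ContinuousAt.continuousWithinAt ?_
  by_cases h0 : z = 0
  · subst h0
    rw [continuousAt_update_same, Metric.tendsto_nhdsWithin_nhds]
    intro ε hε
    obtain ⟨T, hT⟩ := h (ε/2) (by positivity)
    refine ⟨min 1 (Real.exp (-T)), by positivity, fun x hx hxd => ?_⟩
    rw [dist_zero_right] at hxd
    have hx0 : 0 < ‖x‖ := norm_pos_iff.2 hx
    have := hT x ⟨hx0, hxd.trans_le (min_le_left _ _)⟩ (by
      have := Real.log_le_log hx0 (hxd.le.trans (min_le_right _ _))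
      rw [Real.log_exp] at this
      linarith)
    rw [Real.dist_eq]
    linarith
  · rw [continuousAt_update_of_ne h0]
    refine hv.continuousAt (isOpen_PDisc.mem_nhds ⟨norm_pos_iff.2 h0, ?_⟩)
    simpa using hz

theorem stmt0 (Ξ₀ G : ℂ → ℂ) (n : ℤ)
    (hΞhol : DifferentiableOn ℂ Ξ₀ PDisc)
    (hGhol : DifferentiableOn ℂ G (Metric.ball (0 : ℂ) 1))
    (hG0 : G 0 ≠ 0)
    (hord : ∀ z ∈ PDisc, Ξ₀ z = z ^ n * G z)
    (u : ℂ → ℝ) (hu : ContDiffOn ℝ 2 u PDisc)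
    (hpde : ∀ z ∈ PDisc, lap u z = 16 * ‖Ξ₀ z‖ ^ 2 * Real.exp (2 * u z)) :
    (∃ β : ℝ, β < (n : ℝ) + 1 ∧ ∃ v : ℂ → ℝ,
        ContinuousOn v (Metric.ball (0 : ℂ) 1) ∧
        ∀ z ∈ PDisc, v z = u z + β * Real.log ‖z‖) ∨
    (∃ v : ℂ → ℝ,
        ContinuousOn v (Metric.ball (0 : ℂ) 1) ∧
        (∀ z ∈ PDisc, v z = u z + ((n : ℝ) + 1) * Real.log ‖z‖ + Real.log |Real.log ‖z‖|) ∧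
        v 0 = -2 * Real.log 2 - Real.log ‖G 0‖) := by
  obtain ⟨P, PP, Q, QQ, H, hcyl⟩ := cyl_of_pde Ξ₀ G n hGhol hG0 hord u hu hpde
  have clog : ContinuousOn (fun z : ℂ => Real.log ‖z‖) PDisc :=
    continuous_norm.continuousOn.log fun z hz => hz.1.ne'
  have lneg : ∀ z ∈ PDisc, Real.log ‖z‖ < 0 := fun z hz => Real.log_neg hz.1 hz.2
  have ne0 : ∀ z ∈ PDisc, z ≠ 0 := fun z hz => norm_pos_iff.1 hz.1
  rcases hcyl.main with ⟨a, ha, c, hc⟩ | hl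
  · left
    refine ⟨(n:ℝ) + 1 - a, by linarith, Function.update
      (fun z => u z + ((n:ℝ) + 1 - a) * Real.log ‖z‖) 0 (c - (Real.log 4 + Real.log ‖G 0‖)), ?_, ?_⟩
    · refine extend_cont (hu.continuousOn.add (continuousOn_const.mul clog)) fun ε hε => ?_
      obtain ⟨T, hT⟩ := hc ε hε
      refine ⟨T, fun z hz hzT => ?_⟩
      have := hT _ hzT (Complex.arg z)
      rw [zc_log hz] at this
      convert this using 2
      show (u z + ((n:ℝ) + 1 - a) * Real.log ‖z‖) - _ = _
      ring
    · intro z hz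
      rw [Function.update_of_ne (ne0 z hz)]
  · right
    refine ⟨Function.update (fun z => u z + ((n:ℝ) + 1) * Real.log ‖z‖ +
      Real.log |Real.log ‖z‖|) 0 (-2 * Real.log 2 - Real.log ‖G 0‖), ?_, ?_, ?_⟩
    · refine extend_cont ((hu.continuousOn.add (continuousOn_const.mul clog)).add
        (clog.abs.log fun z hz => abs_ne_zero.2 (lneg z hz).ne)) fun ε hε => ?_
      obtain ⟨T, hT⟩ := hl ε hε
      refine ⟨T, fun z hz hzT => ?_⟩
      have := hT _ hzT (Complex.arg z)
      rw [zc_log hz] at this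
      convert this using 2
      show (u z + ((n:ℝ) + 1) * Real.log ‖z‖ + Real.log |Real.log ‖z‖|) - _ = _
      rw [abs_of_neg (lneg z hz), show (4:ℝ) = 2^2 by norm_num, Real.log_pow]
      push_cast
      ring
    · intro z hz
      rw [Function.update_of_ne (ne0 z hz)]
    · simp
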